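/- Let k > 0, let w_a, w_{a*}, w_b, w_{b*} be words with w_b ≠ w_{a*} and w_{b*} ≠ w_a, and set W := {w_b, w_{a*}}, W_* := {w_{b*}, w_a}. If each of the four words has a shifted embedding with respect to C, i.e. Cᵀ.mulVec w⃗_i = PMI_i − (log k)·𝟙, then the shift cancels and the same analogy identity holds: w⃗_{b*} = w⃗_{a*} − w⃗_a + w⃗_b + C†.mulVec( ρ^{W,W_*} + σ^W − σ^{W_*} − (τ^W − τ^{W_*})·𝟙 ). (Paper's Corollary 11: the analogy identity holds unchanged for word2vec-type embeddings factorising the shifted PMI matrix.) -/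

import Mathlib

open MeasureTheory Real Finset Matrix

namespace AnalogiesExplained

variable {Ω : Type*}

/-- Conditional probability `p(B ∣ A) = μ(A ∩ B) / μ(A)` (as a real number). -/
noncomputable def condP [MeasurableSpace Ω] (μ : Measure Ω) (A B : Set Ω) : ℝ :=
  (μ (A ∩ B)).toReal / (μ A).toReal

/-- Pointwise mutual information `PMI(A, B) = log (μ(A ∩ B) / (μ(A)·μ(B)))`. -/
noncomputable def PMI [MeasurableSpace Ω] (μ : Measure Ω) (A B : Set Ω) : ℝ :=
  Real.log ((μ (A ∩ B)).toReal / ((μ A).toReal * (μ B).toReal))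

/-- The joint event of a finite word set: `A_W = ⋂ i ∈ W, A i`. -/
def jointEvent {ι : Type*} (A : ι → Set Ω) (W : Finset ι) : Set Ω :=
  ⋂ i ∈ W, A i

/-- Paraphrase error `ρ^{W,W*}_j = log (p(B_j ∣ A_{W*}) / p(B_j ∣ A_W))`. -/
noncomputable def rho [MeasurableSpace Ω] (μ : Measure Ω) (AW AWstar B : Set Ω) : ℝ :=
  Real.log (condP μ AWstar B / condP μ AW B)

/-- Conditional-dependence error `σ^W_j = log (p(A_W ∣ B_j) / ∏_{i ∈ W} p(A_i ∣ B_j))`. -/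
noncomputable def sigma [MeasurableSpace Ω] {ι : Type*} (μ : Measure Ω) (A : ι → Set Ω)
    (W : Finset ι) (B : Set Ω) : ℝ :=
  Real.log (condP μ B (jointEvent A W) / ∏ i ∈ W, condP μ B (A i))

/-- Marginal-dependence error `τ^W = log (μ(A_W) / ∏_{i ∈ W} μ(A_i))`. -/
noncomputable def tau [MeasurableSpace Ω] {ι : Type*} (μ : Measure Ω) (A : ι → Set Ω)
    (W : Finset ι) : ℝ :=
  Real.log ((μ (jointEvent A W)).toReal / ∏ i ∈ W, (μ (A i)).toReal)

/-!
The pointwise mutual information of a joint event `A_W` with `B` is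
`log p(A_W ∣ B) - log μ(A_W)`. Replacing each of the two terms by its value under independence of
the words of `W` costs `σ^W` and `τ^W`, so `PMI(A_W, B) = ∑ i ∈ W, PMI(A i, B) + σ^W - τ^W`.
Passing from `A_W` to `A_{W_*}` costs `ρ^{W,W_*}`, which gives a relation between sums of PMI
vectors. These sums are the images under `Cᵀ` of sums of embeddings, up to one shift per word, and
`(C * Cᵀ)⁻¹ * C` is a left inverse of `Cᵀ`. The shift cancels since `W` and `W_*` have equally
many words.
-/

section PointwiseMutualInformation

variable [MeasurableSpace Ω] {μ : Measure Ω} {S T B : Set Ω} {ι : Type*} {A : ι → Set Ω}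
  {W Wstar : Finset ι}

theorem PMI_comm (μ : Measure Ω) (S T : Set Ω) : PMI μ S T = PMI μ T S := by
  rw [PMI, PMI, Set.inter_comm, mul_comm]

theorem measure_inter_ne_zero_of_mem {i : ι} (hi : i ∈ W) (h : μ (jointEvent A W ∩ B) ≠ 0) :
    μ (A i ∩ B) ≠ 0 :=
  fun h0 => h (measure_mono_null (Set.inter_subset_inter_left B (Set.biInter_subset_of_mem hi)) h0)

variable [IsFiniteMeasure μ]

theorem toReal_measure_ne_zero_of_subset (hST : S ⊆ T) (hS : μ S ≠ 0) : (μ T).toReal ≠ 0 :=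
  ENNReal.toReal_ne_zero.2 ⟨fun hT => hS (measure_mono_null hST hT), measure_ne_top μ T⟩

theorem condP_ne_zero (h : μ (S ∩ T) ≠ 0) : condP μ S T ≠ 0 :=
  div_ne_zero (toReal_measure_ne_zero_of_subset subset_rfl h)
    (toReal_measure_ne_zero_of_subset Set.inter_subset_left h)

theorem PMI_eq_log_condP_sub_log (h : μ (S ∩ T) ≠ 0) :
    PMI μ S T = log (condP μ S T) - log (μ T).toReal := by
  rw [← log_div (condP_ne_zero h) (toReal_measure_ne_zero_of_subset Set.inter_subset_right h), PMI,
    condP, div_div]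

theorem rho_eq_PMI_sub_PMI (hS : μ (S ∩ B) ≠ 0) (hT : μ (T ∩ B) ≠ 0) :
    rho μ S T B = PMI μ T B - PMI μ S B := by
  rw [rho, log_div (condP_ne_zero hT) (condP_ne_zero hS), PMI_eq_log_condP_sub_log hS,
    PMI_eq_log_condP_sub_log hT, sub_sub_sub_cancel_right]

theorem sigma_eq_log_sub_sum (h : μ (jointEvent A W ∩ B) ≠ 0) :
    sigma μ A W B = log (condP μ B (jointEvent A W)) - ∑ i ∈ W, log (condP μ B (A i)) := by
  have hA : ∀ i ∈ W, condP μ B (A i) ≠ 0 := fun i hi =>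
    condP_ne_zero (Set.inter_comm (A i) B ▸ measure_inter_ne_zero_of_mem hi h)
  rw [sigma, log_div (condP_ne_zero (Set.inter_comm _ B ▸ h)) (prod_ne_zero_iff.2 hA), log_prod hA]

theorem tau_eq_log_sub_sum (h : μ (jointEvent A W) ≠ 0) :
    tau μ A W = log (μ (jointEvent A W)).toReal - ∑ i ∈ W, log (μ (A i)).toReal := by
  have hA : ∀ i ∈ W, (μ (A i)).toReal ≠ 0 := fun i hi =>
    toReal_measure_ne_zero_of_subset (Set.biInter_subset_of_mem hi) h
  rw [tau, log_div (toReal_measure_ne_zero_of_subset subset_rfl h) (prod_ne_zero_iff.2 hA),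
    log_prod hA]

theorem PMI_jointEvent (h : μ (jointEvent A W ∩ B) ≠ 0) :
    PMI μ (jointEvent A W) B = ∑ i ∈ W, PMI μ (A i) B + sigma μ A W B - tau μ A W := by
  have hPMI {S : Set Ω} (hS : μ (S ∩ B) ≠ 0) :
      PMI μ S B = log (condP μ B S) - log (μ S).toReal := by
    rw [PMI_comm, PMI_eq_log_condP_sub_log (Set.inter_comm S B ▸ hS)]
  have hW : μ (jointEvent A W) ≠ 0 := fun h0 => h (measure_inter_null_of_null_left B h0)
  rw [hPMI h, sum_congr rfl fun i hi => hPMI (measure_inter_ne_zero_of_mem hi h),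
    sum_sub_distrib, sigma_eq_log_sub_sum h, tau_eq_log_sub_sum hW]
  ring

theorem sum_PMI_eq_sum_PMI_add_errors (hW : μ (jointEvent A W ∩ B) ≠ 0)
    (hWstar : μ (jointEvent A Wstar ∩ B) ≠ 0) :
    ∑ i ∈ Wstar, PMI μ (A i) B = ∑ i ∈ W, PMI μ (A i) B
      + (rho μ (jointEvent A W) (jointEvent A Wstar) B + sigma μ A W B - sigma μ A Wstar B
        - (tau μ A W - tau μ A Wstar)) := by
  rw [rho_eq_PMI_sub_PMI hW hWstar, PMI_jointEvent hW, PMI_jointEvent hWstar]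
  ring

end PointwiseMutualInformation

section LinearAlgebra

variable {m n R : Type*} [Fintype m]

theorem eq_add_mulVec_of_mulVec_eq_add [DecidableEq m] [Fintype n] [CommRing R]
    {C : Matrix m n R} {D : Matrix n m R} (hCD : IsUnit (C * D)) {x y : m → R} {e : n → R}
    (h : D *ᵥ x = D *ᵥ y + e) : x = y + ((C * D)⁻¹ * C) *ᵥ e := by
  have hinv : (C * D)⁻¹ * C * D = 1 := by
    rw [Matrix.mul_assoc, nonsing_inv_mul _ ((isUnit_iff_isUnit_det _).1 hCD)]
  calc x = ((C * D)⁻¹ * C) *ᵥ (D *ᵥ x) := by rw [mulVec_mulVec, hinv, one_mulVec]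
    _ = y + ((C * D)⁻¹ * C) *ᵥ e := by rw [h, mulVec_add, mulVec_mulVec, hinv, one_mulVec]

theorem mulVec_sum_eq_sum_sub_card_mul [NonAssocRing R] {ι : Type*} {D : Matrix n m R}
    {W : Finset ι} {w : ι → m → R} {p : ι → n → R} {s : R}
    (hw : ∀ i ∈ W, D *ᵥ w i = fun j => p i j - s) :
    D *ᵥ ∑ i ∈ W, w i = fun j => ∑ i ∈ W, p i j - #W * s := by
  rw [mulVec_sum, sum_congr rfl hw]
  ext j
  simp only [Finset.sum_apply, sum_sub_distrib, sum_const, nsmul_eq_mul]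

end LinearAlgebra

theorem analogy_embedding_shifted_general [MeasurableSpace Ω] {μ : Measure Ω} [IsFiniteMeasure μ]
    {ι m n : Type*} [Fintype m] [DecidableEq m] [Fintype n] {A : ι → Set Ω} {B : n → Set Ω}
    {W Wstar : Finset ι} (hW : ∀ j, μ (jointEvent A W ∩ B j) ≠ 0)
    (hWstar : ∀ j, μ (jointEvent A Wstar ∩ B j) ≠ 0) {C : Matrix m n ℝ} (hC : IsUnit (C * Cᵀ))
    {w : ι → m → ℝ} {s : ℝ} (hw : ∀ i ∈ W, Cᵀ *ᵥ w i = fun j => PMI μ (A i) (B j) - s)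
    (hwstar : ∀ i ∈ Wstar, Cᵀ *ᵥ w i = fun j => PMI μ (A i) (B j) - s) :
    ∑ i ∈ Wstar, w i = ∑ i ∈ W, w i + ((C * Cᵀ)⁻¹ * C) *ᵥ fun j =>
      rho μ (jointEvent A W) (jointEvent A Wstar) (B j) + sigma μ A W (B j) - sigma μ A Wstar (B j)
        - (tau μ A W - tau μ A Wstar) + (#W - #Wstar) * s := by
  refine eq_add_mulVec_of_mulVec_eq_add hC ?_
  rw [mulVec_sum_eq_sum_sub_card_mul hw, mulVec_sum_eq_sum_sub_card_mul hwstar]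
  ext j
  rw [Pi.add_apply, sum_PMI_eq_sum_PMI_add_errors (hW j) (hWstar j)]
  ring

/-- **Corollary 11.** For shifted (word2vec-type) embeddings `Cᵀ w⃗_i = PMI_i − (log k)·𝟙`,
the shift cancels and the analogy identity with canonical parameters holds unchanged:
`w⃗_{b*} = w⃗_{a*} − w⃗_a + w⃗_b + C†(ρ^{W,W_*} + σ^W − σ^{W_*} − (τ^W − τ^{W_*})·𝟙)`,
where `W = {w_b, w_{a*}}` and `W_* = {w_{b*}, w_a}`. -/
theorem analogy_embedding_shifted
    [MeasurableSpace Ω] (μ : Measure Ω) [IsProbabilityMeasure μ]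
    {ι : Type*} [DecidableEq ι] (A : ι → Set Ω) {n : ℕ} (B : Fin n → Set Ω)
    (a astar b bstar : ι)
    (hbas : b ≠ astar) (hbsa : bstar ≠ a)
    (hmA : ∀ i, MeasurableSet (A i)) (hmB : ∀ j, MeasurableSet (B j))
    (hA : ∀ i ∈ ({b, astar, bstar, a} : Finset ι), 0 < (μ (A i)).toReal)
    (hB : ∀ j, 0 < (μ (B j)).toReal)
    (hAW : 0 < (μ (jointEvent A {b, astar})).toReal)
    (hAWs : 0 < (μ (jointEvent A {bstar, a})).toReal)
    (hAB : ∀ i ∈ ({b, astar, bstar, a} : Finset ι), ∀ j, 0 < (μ (A i ∩ B j)).toReal)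
    (hAWB : ∀ j, 0 < (μ (jointEvent A {b, astar} ∩ B j)).toReal)
    (hAWsB : ∀ j, 0 < (μ (jointEvent A {bstar, a} ∩ B j)).toReal)
    (k : ℝ) (hk : 0 < k)
    {d : ℕ} (C : Matrix (Fin d) (Fin n) ℝ)
    (hC : IsUnit (C * C.transpose))
    (wv : ι → Fin d → ℝ)
    (hwa : C.transpose.mulVec (wv a) = fun j => PMI μ (A a) (B j) - Real.log k)
    (hwas : C.transpose.mulVec (wv astar) = fun j => PMI μ (A astar) (B j) - Real.log k)
    (hwb : C.transpose.mulVec (wv b) = fun j => PMI μ (A b) (B j) - Real.log k)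
    (hwbs : C.transpose.mulVec (wv bstar) = fun j => PMI μ (A bstar) (B j) - Real.log k) :
    wv bstar = wv astar - wv a + wv b
      + ((C * C.transpose)⁻¹ * C).mulVec
          (fun j => rho μ (jointEvent A {b, astar}) (jointEvent A {bstar, a}) (B j)
            + sigma μ A {b, astar} (B j) - sigma μ A {bstar, a} (B j)
            - (tau μ A {b, astar} - tau μ A {bstar, a})) := by
  have h := analogy_embedding_shifted_general (W := {b, astar}) (Wstar := {bstar, a}) (w := wv)
    (s := log k) (fun j => (ENNReal.toReal_pos_iff.1 (hAWB j)).1.ne')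
    (fun j => (ENNReal.toReal_pos_iff.1 (hAWsB j)).1.ne') hC
    (by simp [hwb, hwas]) (by simp [hwbs, hwa])
  simp only [sum_pair hbas, sum_pair hbsa, card_pair hbas, card_pair hbsa, sub_self, zero_mul,
    add_zero] at h
  rw [eq_sub_of_add_eq h]
  abel

end AnalogiesExplained
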